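/- Let σ be a simplex of Ind(G_m^d) and i ∈ {1,…,m}. If either a_i ∈ σ or σ ∪ {a_i} is a simplex of Ind(G_m^d), then there exists j ≤ i such that σ ∈ 𝒮_{a_j} = S_{a_j} ∪ μ_{a_j}(S_{a_j}). -/

import Mathlib

/-!
The set matched at a vertex `x` is closed under toggling `x`: it consists of the `σ` for which both
`σ ∪ {x}` and `σ \ {x}` are still present. By induction along the list of vertices, the simplices
present after treating a set `A` of vertices are exactly those to which no vertex of `A` can be
added. The point is that deleting `x` from such a simplex `σ` leaves one of the same kind: if some
`y ∈ A` could be added to `σ \ {x}`, then it could be added to `σ` as well, because `x` and `y` are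
not adjacent. Hence `σ` is matched at the first vertex of the list that can be added to it.
-/

open Finset

/-- The graph `G_m^d` on vertex set `Fin m ⊕ Fin m` (0-based indexing):
`Sum.inl i` is the vertex `a_{i+1}` and `Sum.inr j` is the vertex `b_{j+1}` of the paper;
`a_i` is adjacent to `b_j` iff `(j - i) mod m ∈ {0, …, d-1}`. -/
def Gmd (m d : ℕ) : SimpleGraph (Fin m ⊕ Fin m) :=
  SimpleGraph.fromRel (fun u v =>
    ∃ i j : Fin m, u = Sum.inl i ∧ v = Sum.inr j ∧ (j.val + m - i.val) % m < d)

/-- A finite set of vertices is independent iff no two of its elements are adjacent. -/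
def IsInd (m d : ℕ) (σ : Finset (Fin m ⊕ Fin m)) : Prop :=
  ∀ u ∈ σ, ∀ v ∈ σ, ¬ (Gmd m d).Adj u v

/-- The face poset `P` of the independence complex `Ind (G_m^d)` (ordered by `⊆`),
including the empty simplex. -/
def faceP (m d : ℕ) : Set (Finset (Fin m ⊕ Fin m)) := {σ | IsInd m d σ}

/-- One step of the matching construction: `S_x(T) = {σ ∈ T | x ∉ σ, σ ∪ {x} ∈ T}`. -/
def stepS {α : Type*} [DecidableEq α] (x : α) (T : Set (Finset α)) : Set (Finset α) :=
  {σ | σ ∈ T ∧ x ∉ σ ∧ insert x σ ∈ T}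

/-- The survivors of one step: `T \ (S_x(T) ∪ μ_x(S_x(T)))`. -/
def stepSurv {α : Type*} [DecidableEq α] (x : α) (T : Set (Finset α)) : Set (Finset α) :=
  T \ (stepS x T ∪ (insert x) '' (stepS x T))

/-- Iterating the matching construction along a list of vertices. -/
def phase {α : Type*} [DecidableEq α] (T : Set (Finset α)) (l : List α) : Set (Finset α) :=
  l.foldl (fun T x => stepSurv x T) T

/-- The list `a_1, …, a_m`. -/
def listA (m : ℕ) : List (Fin m ⊕ Fin m) := (List.finRange m).map Sum.inl
/-- The list `b_1, …, b_m`. -/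
def listB (m : ℕ) : List (Fin m ⊕ Fin m) := (List.finRange m).map Sum.inr

/-- `S_{a_{i+1}}` (0-based `i`): the set matched with `a_{i+1}` at stage `i+1` of phase one. -/
def Sa (m d : ℕ) (i : Fin m) : Set (Finset (Fin m ⊕ Fin m)) :=
  stepS (Sum.inl i) (phase (faceP m d) ((listA m).take i.val))

/-- `M = P \ (S_1 ∪ μ_1(S_1))`, the simplices surviving phase one. -/
def setM (m d : ℕ) : Set (Finset (Fin m ⊕ Fin m)) := phase (faceP m d) (listA m)

/-- `S_{b_{i+1}}` (0-based `i`): the set matched with `b_{i+1}` at stage `i+1` of phase two. -/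
def Sb (m d : ℕ) (i : Fin m) : Set (Finset (Fin m ⊕ Fin m)) :=
  stepS (Sum.inr i) (phase (setM m d) ((listB m).take i.val))

/-- `𝒮_{a_{i+1}} = S_{a_{i+1}} ∪ μ_{a_{i+1}}(S_{a_{i+1}})`. -/
def scriptSa (m d : ℕ) (i : Fin m) : Set (Finset (Fin m ⊕ Fin m)) :=
  Sa m d i ∪ (insert (Sum.inl i)) '' (Sa m d i)

/-- `𝒮_{b_{i+1}} = S_{b_{i+1}} ∪ μ_{b_{i+1}}(S_{b_{i+1}})`. -/
def scriptSb (m d : ℕ) (i : Fin m) : Set (Finset (Fin m ⊕ Fin m)) :=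
  Sb m d i ∪ (insert (Sum.inr i)) '' (Sb m d i)

/-- The critical cells `C = P \ (S ∪ μ(S))`. -/
def setC (m d : ℕ) : Set (Finset (Fin m ⊕ Fin m)) :=
  faceP m d \ ((⋃ i : Fin m, scriptSa m d i) ∪ (⋃ i : Fin m, scriptSb m d i))

/-- The matching relation: `MatchRel σ τ` iff `τ = μ(σ)` for `σ ∈ S = S_1 ∪ S_2`. -/
def MatchRel (m d : ℕ) (σ τ : Finset (Fin m ⊕ Fin m)) : Prop :=
  (∃ i : Fin m, σ ∈ Sa m d i ∧ τ = insert (Sum.inl i) σ) ∨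
  (∃ i : Fin m, σ ∈ Sb m d i ∧ τ = insert (Sum.inr i) σ)

/-- `B_{s+1} = {b_{s+1}, b_{s+2}, …, b_{s+m-d}}` (0-based `s`, subscripts mod `m`). -/
def Bset (m d : ℕ) (s : Fin m) : Finset (Fin m ⊕ Fin m) :=
  (Finset.univ.filter (fun j : Fin m => (j.val + m - s.val) % m < m - d)).image Sum.inr

/-- `b_{n+1} ∈ σ` (0-based subscript `n`). -/
def hasB (m : ℕ) (σ : Finset (Fin m ⊕ Fin m)) (n : ℕ) : Prop :=
  ∃ j : Fin m, j.val = n ∧ Sum.inr j ∈ σ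

/-- `σ ⊆ B`. -/
def onlyB (m : ℕ) (σ : Finset (Fin m ⊕ Fin m)) : Prop :=
  ∀ v ∈ σ, ∃ j : Fin m, v = Sum.inr j

/-- Property `P_l` of the paper, with parameter `j1` (0-based: the paper's `j_1 - 1`, so
`1 ≤ j1 ≤ d`).  With 0-based subscripts `i_r = (r-1)(d+1)`, `j_r = j1 + (r-1)(d+1)` and
`k = m + j1 - (d+1)`:  σ ∈ M, σ ⊆ B, the `2l` smallest subscripts of σ are exactly
`0 = i_1, j_1, i_2, j_2, …, i_l, j_l`, the largest subscript is `k`, and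
`σ \ {b_{i_r}} ∉ M`, `σ \ {b_{j_r}} ∉ M` for all `1 ≤ r ≤ l`. -/
def propP (m d l j1 : ℕ) (σ : Finset (Fin m ⊕ Fin m)) : Prop :=
  σ ∈ setM m d ∧ onlyB m σ ∧ 1 ≤ j1 ∧ j1 ≤ d ∧
  (∀ r, 1 ≤ r → r ≤ l → hasB m σ ((r-1)*(d+1)) ∧ hasB m σ (j1 + (r-1)*(d+1))) ∧
  (∀ j : Fin m, Sum.inr j ∈ σ → j.val ≤ j1 + (l-1)*(d+1) →
      ∃ r, 1 ≤ r ∧ r ≤ l ∧ (j.val = (r-1)*(d+1) ∨ j.val = j1 + (r-1)*(d+1))) ∧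
  hasB m σ (m + j1 - (d+1)) ∧
  (∀ j : Fin m, Sum.inr j ∈ σ → j.val ≤ m + j1 - (d+1)) ∧
  (∀ r, 1 ≤ r → r ≤ l → ∀ j : Fin m,
      (j.val = (r-1)*(d+1) ∨ j.val = j1 + (r-1)*(d+1)) → σ.erase (Sum.inr j) ∉ setM m d)

lemma mem_take_map_finRange {α : Type*} {n i : ℕ} {a : Fin n → α} {y : α} :
    y ∈ ((List.finRange n).map a).take i ↔ ∃ k : Fin n, k.val < i ∧ a k = y := by
  simp only [List.mem_take_iff_getElem, List.getElem_map, List.getElem_finRange,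
    List.length_map, List.length_finRange, lt_inf_iff]
  constructor
  · rintro ⟨k, ⟨hki, hkn⟩, rfl⟩
    exact ⟨⟨k, hkn⟩, hki, rfl⟩
  · rintro ⟨k, hk, rfl⟩
    exact ⟨k, ⟨hk, k.isLt⟩, rfl⟩

section Matching

variable {α : Type*} [DecidableEq α] {P T : Set (Finset α)} {A : Set α} {σ : Finset α} {x : α}

/-- `𝒮_x(T) = S_x(T) ∪ μ_x(S_x(T))`, the members of `T` matched at the vertex `x`. -/
def matched (x : α) (T : Set (Finset α)) : Set (Finset α) :=
  stepS x T ∪ insert x '' stepS x T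

/-- The sets `σ ∈ P` to which no vertex of `A` can be added within `P`. A vertex already in `σ`
counts as one that can be added, so these sets are also disjoint from `A`. -/
def unextendable (P : Set (Finset α)) (A : Set α) : Set (Finset α) :=
  {σ | σ ∈ P ∧ ∀ y ∈ A, insert y σ ∉ P}

/-- Any two vertices of `A` that can be added separately to a set within `P` can be added together.
It abstracts the case of an independence complex `P` and an independent set `A` of vertices. -/
def JointlyAddable (P : Set (Finset α)) (A : Set α) : Prop :=
  ∀ ⦃x⦄, x ∈ A → ∀ ⦃y⦄, y ∈ A → ∀ ⦃τ : Finset α⦄,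
    insert x τ ∈ P → insert y τ ∈ P → insert y (insert x τ) ∈ P

lemma JointlyAddable.mono {B : Set α} (hB : JointlyAddable P B) (hAB : A ⊆ B) :
    JointlyAddable P A :=
  fun _ hx _ hy ↦ hB (hAB hx) (hAB hy)

lemma mem_matched : σ ∈ matched x T ↔ insert x σ ∈ T ∧ σ.erase x ∈ T := by
  constructor
  · rintro (⟨hσ, hx, hins⟩ | ⟨τ, ⟨hτ, hx, hins⟩, rfl⟩)
    · exact ⟨hins, by rwa [erase_eq_of_notMem hx]⟩
    · exact ⟨by rwa [insert_idem], by rwa [erase_insert hx]⟩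
  · rintro ⟨hins, hera⟩
    by_cases hx : x ∈ σ
    · refine .inr ⟨σ.erase x, ⟨hera, notMem_erase x σ, ?_⟩, insert_erase hx⟩
      rwa [insert_erase hx, ← insert_eq_of_mem hx]
    · exact .inl ⟨by rwa [erase_eq_of_notMem hx] at hera, hx, hins⟩

lemma insert_mem_unextendable (hP : IsLowerSet P) (hσ : σ ∈ unextendable P A)
    (hx : insert x σ ∈ P) : insert x σ ∈ unextendable P A :=
  ⟨hx, fun y hy h ↦ hσ.2 y hy (hP (insert_subset_insert y (subset_insert x σ)) h)⟩

lemma erase_mem_unextendable (hP : IsLowerSet P) (hA : JointlyAddable P (insert x A))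
    (hσ : σ ∈ unextendable P A) : σ.erase x ∈ unextendable P A := by
  by_cases hx : x ∈ σ
  · refine ⟨hP (erase_subset x σ) hσ.1, fun y hy h ↦ hσ.2 y hy ?_⟩
    have hxσ : insert x (σ.erase x) ∈ P := by rw [insert_erase hx]; exact hσ.1
    have hyxσ := hA (Set.mem_insert x A) (Set.mem_insert_of_mem x hy) hxσ h
    rwa [insert_erase hx] at hyxσ
  · rwa [erase_eq_of_notMem hx]

lemma mem_matched_unextendable (hP : IsLowerSet P) (hA : JointlyAddable P (insert x A))
    (hσ : σ ∈ unextendable P A) : σ ∈ matched x (unextendable P A) ↔ insert x σ ∈ P :=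
  ⟨fun h ↦ (mem_matched.mp h).1.1, fun h ↦
    mem_matched.mpr ⟨insert_mem_unextendable hP hσ h, erase_mem_unextendable hP hA hσ⟩⟩

lemma stepSurv_unextendable (hP : IsLowerSet P) (hA : JointlyAddable P (insert x A)) :
    stepSurv x (unextendable P A) = unextendable P (insert x A) := by
  ext σ
  calc σ ∈ stepSurv x (unextendable P A)
    _ ↔ σ ∈ unextendable P A ∧ σ ∉ matched x (unextendable P A) := Iff.rfl
    _ ↔ σ ∈ unextendable P A ∧ insert x σ ∉ P :=
      and_congr_right fun hσ ↦ not_congr (mem_matched_unextendable hP hA hσ)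
    _ ↔ σ ∈ unextendable P (insert x A) := by
      simp only [unextendable, Set.mem_ofPred_eq, Set.forall_mem_insert]
      tauto

lemma phase_concat (T : Set (Finset α)) (l : List α) (x : α) :
    phase T (l ++ [x]) = stepSurv x (phase T l) :=
  List.foldl_concat ..

lemma phase_eq_unextendable (hP : IsLowerSet P) (l : List α)
    (hl : JointlyAddable P {y | y ∈ l}) : phase P l = unextendable P {y | y ∈ l} := by
  induction l using List.reverseRecOn with
  | nil => simp [phase, unextendable]
  | append_singleton l x ih =>
    have hset : {y | y ∈ l ++ [x]} = insert x {y | y ∈ l} := by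
      ext y
      simp [or_comm]
    rw [hset] at hl ⊢
    rw [phase_concat, ih (hl.mono (Set.subset_insert _ _)), stepSurv_unextendable hP hl]

theorem stmt1_general {n : ℕ} {a : Fin n → α} (hP : IsLowerSet P)
    (ha : JointlyAddable P (Set.range a)) (hσ : σ ∈ P) (i : Fin n)
    (h : a i ∈ σ ∨ insert (a i) σ ∈ P) :
    ∃ j ≤ i, σ ∈ matched (a j) (phase P (((List.finRange n).map a).take j)) := by
  have hi : insert (a i) σ ∈ P := h.elim (fun hi ↦ by rwa [insert_eq_of_mem hi]) id
  obtain ⟨j, hji, hj⟩ : ∃ j ≤ i, Minimal (fun k ↦ insert (a k) σ ∈ P) j :=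
    exists_minimal_le_of_wellFoundedLT _ i hi
  have htake : insert (a j) {y | y ∈ ((List.finRange n).map a).take j} ⊆ Set.range a := by
    rintro y (rfl | hy)
    · exact Set.mem_range_self j
    · obtain ⟨k, -, hk⟩ := mem_take_map_finRange.mp hy
      exact ⟨k, hk⟩
  have hσj : σ ∈ unextendable P {y | y ∈ ((List.finRange n).map a).take j} := by
    refine ⟨hσ, fun y hy ↦ ?_⟩
    obtain ⟨k, hk, rfl⟩ := mem_take_map_finRange.mp hy
    exact hj.not_prop_of_lt hk
  refine ⟨j, hji, ?_⟩
  rw [phase_eq_unextendable hP _ (ha.mono ((Set.subset_insert _ _).trans htake))]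
  exact (mem_matched_unextendable hP (ha.mono htake) hσj).mpr hj.prop

end Matching

section IndependenceComplex

variable {V : Type*} {G : SimpleGraph V}

lemma isLowerSet_isIndepSet : IsLowerSet {σ : Finset V | G.IsIndepSet σ} :=
  fun _ _ hτσ hσ ↦ Set.Pairwise.mono (coe_subset.mpr hτσ) hσ

lemma jointlyAddable_of_isIndepSet [DecidableEq V] {A : Set V} (hA : G.IsIndepSet A) :
    JointlyAddable {σ : Finset V | G.IsIndepSet σ} A := by
  have hsymm : Std.Symm fun u v ↦ ¬ G.Adj u v := ⟨fun _ _ h h' ↦ h h'.symm⟩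
  intro x hx y hy τ hxτ hyτ
  simp only [Set.mem_ofPred_eq, coe_insert, SimpleGraph.IsIndepSet,
    Set.pairwise_insert_of_symm] at hxτ hyτ ⊢
  refine ⟨hxτ, ?_⟩
  rintro v (rfl | hv) hne
  · exact hA hy hx hne
  · exact hyτ.2 v hv hne

end IndependenceComplex

lemma faceP_eq_isIndepSet (m d : ℕ) :
    faceP m d = {σ : Finset (Fin m ⊕ Fin m) | (Gmd m d).IsIndepSet σ} :=
  Set.ext fun _ ↦ ⟨fun h _ hu _ hv _ ↦ h _ hu _ hv,
    fun h _ hu _ hv huv ↦ h hu hv huv.ne huv⟩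

lemma isLowerSet_faceP (m d : ℕ) : IsLowerSet (faceP m d) :=
  faceP_eq_isIndepSet m d ▸ isLowerSet_isIndepSet

lemma isIndepSet_range_inl (m d : ℕ) : (Gmd m d).IsIndepSet (Set.range Sum.inl) := by
  rintro _ ⟨i, rfl⟩ _ ⟨j, rfl⟩ -
  simp [Gmd]

lemma jointlyAddable_faceP_range_inl (m d : ℕ) :
    JointlyAddable (faceP m d) (Set.range Sum.inl) :=
  faceP_eq_isIndepSet m d ▸ jointlyAddable_of_isIndepSet (isIndepSet_range_inl m d)

/-- if `σ` is a simplex of `Ind(G_m^d)` and either `a_i ∈ σ` or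
`σ ∪ {a_i}` is a simplex, then `σ ∈ 𝒮_{a_j} = S_{a_j} ∪ μ_{a_j}(S_{a_j})` for some `j ≤ i`. -/
theorem stmt1 (m d : ℕ) (hd : 1 ≤ d) (hdm : d ≤ m)
    (σ : Finset (Fin m ⊕ Fin m)) (hσ : σ ∈ faceP m d) (i : Fin m)
    (h : Sum.inl i ∈ σ ∨ insert (Sum.inl i) σ ∈ faceP m d) :
    ∃ j : Fin m, j ≤ i ∧ σ ∈ scriptSa m d j :=
  stmt1_general (isLowerSet_faceP m d) (jointlyAddable_faceP_range_inl m d) hσ i h
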